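/- Let F be a finite field, let s,ℓ,k ≥ 1, let α ∈ {1,−1} ⊆ F and β = γ = 1 (so r = r' = 1). Assume ω ∈ F is a primitive k-th root of unity and θ ∈ F is a primitive ℓ-th root of unity. Let R := F[x,y,z]/⟨x^s−α, y^ℓ−1, z^k−1⟩ with quotient map π, let ζ_t(z) := ∏_{t'≠t}(z − ω^{1+t'})/(ω^{1+t} − ω^{1+t'}) for 0 ≤ t ≤ k−1 and η_j(y) := ∏_{j'≠j}(y − θ^{1+j'})/(θ^{1+j} − θ^{1+j'}) for 0 ≤ j ≤ ℓ−1, let V := (Fin s × Fin ℓ × Fin k) → F with dot product ⟨c,d⟩ := Σ c(i,j,t)d(i,j,t), and let φ : V → R be the F-linear isomorphism φ(c) := Σ c(i,j,t)·π(x^i y^j z^t). For each t, j let p_j^{(t)} ∈ F[x] be a monic divisor of x^s − α of degree a_{t,j}, let q_j^{(t)} := (x^s − α)/p_j^{(t)}, and let C be the ideal of R generated by the elements π(ζ_t(z)·η_j(y)·p_j^{(t)}(x)). Then φ^{−1}(C) equals its own orthogonal complement in V if and only if both: (i) sℓk = 2·Σ_{t,j} a_{t,j}; and (ii) for all t, j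 there exist polynomials m, m' ∈ F[x] such that q_j^{(t)*} ≡ m·p_{(ℓ−2−j) mod ℓ}^{((k−2−t) mod k)} (mod x^s−α) and p_j^{(t)} ≡ m'·q_{(ℓ−2−j) mod ℓ}^{((k−2−t) mod k)*} (mod x^s−α), where * denotes the reciprocal polynomial. -/

import Mathlib

/-!
The Lagrange idempotents `ζ_t(z) η_j(y)` split `R` into the components
`F[x] / ⟨x^s - α⟩` obtained by putting `z = ω^(1+t)`, `y = θ^(1+j)`, and in these components the
code `C` is `∏ ⟨p_{t,j}⟩` (`mk_mem_code_iff`). For a coefficient vector `v` the component at `(j, t)`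
is the polynomial `spec v (j, t)`, of degree less than `s`, whose coefficients are the discrete
Fourier transforms of the slices of `v`.

Parseval's identity (`parseval`) turns the dot product of `v` and `b` into the sum over all `(j, t)`
of the coefficientwise dot products of the component of `b` at `(j, t)` with the component of `v` at
the inverse nodes, whose index is `(-2 - j, -2 - t)` modulo `(ℓ, k)` (`negIdx`). The problem is thus
reduced to one variable: if `P * Q = x^s - α` with `α² = 1`, then the orthogonal complement of the
multiples of `P` among the polynomials of degree less than `s` is the set of multiples of `Q*`
(`orthogonal_iff_reverse_dvd`). One inclusion is the vanishing of the coefficient of `x^(s-1)` in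
`Q* u · P* w = (1 - α x^s) u w` for degree reasons; for the other, the orthogonality relations say
that `f P*` agrees modulo `x^s - α` with a polynomial of degree less than `deg P`, which is a
multiple of `P*` and hence zero.

So `C` is self-dual exactly when `p_{-2-t,-2-j}` and `q_{t,j}*` divide each other for all `t, j`
(`selfDual_iff`). All these polynomials divide `x^s - α`, so the congruences in (ii) are plain
divisibilities, and since the index map is an involution (ii) says exactly this. Condition (i)
follows by comparing degrees: `a_{-2-t,-2-j} = s - a_{t,j}`, summed over all `t, j`.
-/

set_option synthInstance.maxHeartbeats 1000000

open Polynomial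

/-- The Lagrange interpolation polynomial `ζ_t` at the `k` points `ω^{1+t'r}`,
`0 ≤ t' ≤ k−1`. -/
noncomputable def zetaPoly {F : Type*} [Field F] (ω : F) (r k t : ℕ) : Polynomial F :=
  ∏ t' ∈ (Finset.range k).erase t,
    (C ((ω ^ (1 + t * r) - ω ^ (1 + t' * r))⁻¹) * (X - C (ω ^ (1 + t' * r))))

/-- The ideal `⟨x^s − α, y^ℓ − β, z^k − γ⟩` of `F[x,y,z]`. -/
noncomputable def ccIdeal (F : Type*) [Field F] (s l k : ℕ) (α β γ : F) :
    Ideal (MvPolynomial (Fin 3) F) :=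
  Ideal.span { MvPolynomial.X 0 ^ s - MvPolynomial.C α,
               MvPolynomial.X 1 ^ l - MvPolynomial.C β,
               MvPolynomial.X 2 ^ k - MvPolynomial.C γ }

/-- A univariate polynomial viewed in `F[x,y,z]` as a polynomial in `x`. -/
noncomputable def inX {F : Type*} [Field F] (p : Polynomial F) : MvPolynomial (Fin 3) F :=
  Polynomial.aeval (MvPolynomial.X 0) p

/-- A univariate polynomial viewed in `F[x,y,z]` as a polynomial in `y`. -/
noncomputable def inY {F : Type*} [Field F] (p : Polynomial F) : MvPolynomial (Fin 3) F :=
  Polynomial.aeval (MvPolynomial.X 1) p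

/-- A univariate polynomial viewed in `F[x,y,z]` as a polynomial in `z`. -/
noncomputable def inZ {F : Type*} [Field F] (p : Polynomial F) : MvPolynomial (Fin 3) F :=
  Polynomial.aeval (MvPolynomial.X 2) p

/-- The `λ`-twisted shift in the `x`-direction on `V = (Fin s × Fin ℓ × Fin k) → F`:
`(T_λ^x c)(i,j,t) = λ·c(s−1,j,t)` if `i = 0`, and `c(i−1,j,t)` otherwise. -/
def shiftX {F : Type*} [Field F] {s l k : ℕ} [NeZero s] (lam : F)
    (c : Fin s × Fin l × Fin k → F) : Fin s × Fin l × Fin k → F :=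
  fun w => (if w.1 = 0 then lam else 1) * c (w.1 - 1, w.2.1, w.2.2)

/-- The `λ`-twisted shift in the `y`-direction. -/
def shiftY {F : Type*} [Field F] {s l k : ℕ} [NeZero l] (lam : F)
    (c : Fin s × Fin l × Fin k → F) : Fin s × Fin l × Fin k → F :=
  fun w => (if w.2.1 = 0 then lam else 1) * c (w.1, w.2.1 - 1, w.2.2)

/-- The `λ`-twisted shift in the `z`-direction. -/
def shiftZ {F : Type*} [Field F] {s l k : ℕ} [NeZero k] (lam : F)
    (c : Fin s × Fin l × Fin k → F) : Fin s × Fin l × Fin k → F :=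
  fun w => (if w.2.2 = 0 then lam else 1) * c (w.1, w.2.1, w.2.2 - 1)

/-- The dot product on `V = (Fin s × Fin ℓ × Fin k) → F`. -/
def dotV {F : Type*} [Field F] {s l k : ℕ}
    (c d : Fin s × Fin l × Fin k → F) : F :=
  ∑ w : Fin s × Fin l × Fin k, c w * d w

/-- Reversal of coordinates: `(ρ b)(i,j,t) = b(s−1−i, ℓ−1−j, k−1−t)`. -/
def revV {F : Type*} [Field F] {s l k : ℕ}
    (b : Fin s × Fin l × Fin k → F) : Fin s × Fin l × Fin k → F :=
  fun w => b (w.1.rev, w.2.1.rev, w.2.2.rev)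

/-- The `F`-linear isomorphism `V → R` sending a coefficient vector `c` to
`Σ c(i,j,t)·π(x^i y^j z^t)` in `R = F[x,y,z]/⟨x^s−α, y^ℓ−β, z^k−γ⟩`. -/
noncomputable def phiV {F : Type*} [Field F] {s l k : ℕ} (α β γ : F)
    (c : Fin s × Fin l × Fin k → F) :
    MvPolynomial (Fin 3) F ⧸ ccIdeal F s l k α β γ :=
  ∑ w : Fin s × Fin l × Fin k,
    c w • Ideal.Quotient.mk (ccIdeal F s l k α β γ)
      (MvPolynomial.X 0 ^ (w.1 : ℕ) * MvPolynomial.X 1 ^ (w.2.1 : ℕ) *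
        MvPolynomial.X 2 ^ (w.2.2 : ℕ))

/-! ### Duality in one variable -/

/-- The dot product of the first `s` coefficients of `f` and `g` is a single coefficient of the
product of `f` with the reflection of `g`. -/
theorem sum_coeff_mul_coeff {F : Type*} [Field F] (s : ℕ) (hs : 0 < s) (f g : F[X]) :
    ∑ i ∈ Finset.range s, f.coeff i * g.coeff i = (f * reflect (s - 1) g).coeff (s - 1) := by
  rw [coeff_mul, Finset.Nat.sum_antidiagonal_eq_sum_range_succ
    (fun a b => f.coeff a * (reflect (s - 1) g).coeff b), Nat.succ_eq_add_one,
    Nat.sub_add_cancel hs]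
  refine Finset.sum_congr rfl fun i hi => ?_
  have hi' := Finset.mem_range.1 hi
  rw [coeff_reflect, revAt_le (by omega), Nat.sub_sub_self (by omega)]

theorem natDegree_reflect_le_of_le {F : Type*} [Field F] {N : ℕ} {w : F[X]}
    (h : w.natDegree ≤ N) : (reflect N w).natDegree ≤ N := by
  refine natDegree_le_iff_coeff_eq_zero.2 fun i hi => ?_
  rw [coeff_reflect, revAt_eq_self_of_lt hi]
  exact coeff_eq_zero_of_natDegree_lt (by omega)

section Factor

variable {F : Type*} [Field F] {s : ℕ} {α : F} {P Q : F[X]}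

theorem coeff_zero_ne_zero_of_mul_eq (hs : 0 < s) (hα : α * α = 1)
    (h : P * Q = X ^ s - C α) : P.coeff 0 ≠ 0 := by
  intro h0
  have h1 := congrArg (fun f => f.coeff 0) h
  have : α = 0 := by simpa [mul_coeff_zero, h0, coeff_X_pow, hs.ne] using h1
  simp [this] at hα

theorem natDegree_reverse_of_coeff_zero (h : P.coeff 0 ≠ 0) :
    P.reverse.natDegree = P.natDegree := by
  rw [reverse_natDegree, natTrailingDegree_eq_zero_of_constantCoeff_ne_zero h, Nat.sub_zero]

theorem reverse_reverse_of_coeff_zero (h : P.coeff 0 ≠ 0) : P.reverse.reverse = P := by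
  ext n
  rw [coeff_reverse, natDegree_reverse_of_coeff_zero h, coeff_reverse, revAt_invol]

theorem reverse_mul_reverse_eq (h : P * Q = X ^ s - C α) : P.reverse * Q.reverse = 1 - C α * X ^ s := by
  rw [← reverse_mul_of_domain, h, reverse, natDegree_X_pow_sub_C, reflect_sub, reflect_C,
    reflect_monomial, revAt_le le_rfl]
  simp

theorem ne_zero_of_mul_eq (hs : 0 < s)
    (h : P * Q = X ^ s - C α) : P ≠ 0 ∧ Q ≠ 0 := by
  have h0 : P * Q ≠ 0 := h ▸ X_pow_sub_C_ne_zero hs α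
  exact ⟨left_ne_zero_of_mul h0, right_ne_zero_of_mul h0⟩

theorem natDegree_add_of_mul_eq (hs : 0 < s)
    (h : P * Q = X ^ s - C α) : P.natDegree + Q.natDegree = s := by
  obtain ⟨hP, hQ⟩ := ne_zero_of_mul_eq hs h
  rw [← natDegree_mul hP hQ, h, natDegree_X_pow_sub_C]

/-- Since `α² = 1`, the reciprocals of the factors of `X ^ s - α` are again factors of it. -/
theorem reverse_dvd_X_pow_sub (hα : α * α = 1)
    (h : P * Q = X ^ s - C α) : Q.reverse ∣ X ^ s - C α := by
  refine ⟨-C α * P.reverse, ?_⟩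
  have h1 := reverse_mul_reverse_eq h
  have h2 : C α * C α = (1 : F[X]) := by rw [← C_mul, hα, C_1]
  linear_combination C α * h1 - X ^ s * h2

/-- Duality in one variable: among polynomials of degree less than `s`, the multiples of `Q*` are
exactly those orthogonal to all multiples of `P`, where `P * Q = X ^ s - α`. -/
theorem orthogonal_iff_reverse_dvd (hs : 0 < s) (hα : α * α = 1)
    (h : P * Q = X ^ s - C α) {f : F[X]} (hf : f.degree < s) :
    (∀ g : F[X], g.degree < s → P ∣ g →
      ∑ i ∈ Finset.range s, f.coeff i * g.coeff i = 0) ↔ Q.reverse ∣ f := by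
  obtain ⟨hP0, hQ0⟩ := ne_zero_of_mul_eq hs h
  have hdeg := natDegree_add_of_mul_eq hs h
  have hrev := reverse_mul_reverse_eq h
  have hPd := natDegree_reverse_of_coeff_zero (coeff_zero_ne_zero_of_mul_eq hs hα h)
  have hQd := natDegree_reverse_of_coeff_zero
    (coeff_zero_ne_zero_of_mul_eq hs hα ((mul_comm Q P).trans h))
  have hPr0 : P.reverse ≠ 0 := by simpa using hP0
  have hQr0 : Q.reverse ≠ 0 := by simpa using hQ0
  have h2 : C α * C α = (1 : F[X]) := by rw [← C_mul, hα, C_1]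
  constructor
  · intro H
    -- Testing against `X ^ i * P` kills the coefficients of `f * P*` in degrees `deg P, …, s - 1`.
    have hc : ∀ n, P.natDegree ≤ n → n < s → (f * P.reverse).coeff n = 0 := by
      intro n hn hns
      have h3 := H (P * X ^ (n - P.natDegree)) (by
        rw [degree_eq_natDegree (mul_ne_zero hP0 (pow_ne_zero _ X_ne_zero)),
          natDegree_mul hP0 (pow_ne_zero _ X_ne_zero), natDegree_X_pow]
        exact_mod_cast (by omega)) (dvd_mul_right _ _)
      have h4 : reflect (s - 1) (P * X ^ (n - P.natDegree)) = P.reverse * X ^ (s - 1 - n) := by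
        conv_lhs => rw [show s - 1 = P.natDegree + (s - 1 - P.natDegree) by omega]
        rw [reflect_mul _ _ le_rfl (by rw [natDegree_X_pow]; omega), reflect_monomial,
          revAt_le (by omega), show s - 1 - P.natDegree - (n - P.natDegree) = s - 1 - n by omega]
        rfl
      rw [sum_coeff_mul_coeff s hs, h4, ← mul_assoc, coeff_mul_X_pow', if_pos (by omega)] at h3
      rwa [show s - 1 - (s - 1 - n) = n by omega] at h3
    -- Write `f * P* = L + X ^ s * H`; then `L + α H` is a multiple of `P*` of smaller degree.
    have hmon : (X ^ s : F[X]).Monic := monic_X_pow s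
    set L := (f * P.reverse) %ₘ X ^ s with hL
    set M := (f * P.reverse) /ₘ X ^ s with hM
    have hLM : L + X ^ s * M = f * P.reverse := modByMonic_add_div _ _
    have hfn : ∀ i, s ≤ i → f.coeff i = 0 := (degree_lt_iff_coeff_zero _ _).1 hf
    have hLs : L.degree < s := by
      simpa using degree_modByMonic_lt (f * P.reverse) hmon
    have hLd : L.degree < P.natDegree := by
      refine (degree_lt_iff_coeff_zero _ _).2 fun n hn => ?_
      by_cases hns : n < s
      · have h5 := hc n hn hns
        rw [← hLM, coeff_add, coeff_X_pow_mul', if_neg (by omega), add_zero] at h5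
        exact h5
      · exact (degree_lt_iff_coeff_zero _ _).1 hLs n (by omega)
    have hMd : M.degree < P.natDegree := by
      refine (degree_lt_iff_coeff_zero _ _).2 fun n hn => ?_
      have h5 : (f * P.reverse).coeff (n + s) = M.coeff n := by
        rw [← hLM, coeff_add, coeff_X_pow_mul,
          (degree_lt_iff_coeff_zero _ _).1 hLs (n + s) (by omega), zero_add]
      rw [← h5]
      by_cases hf0 : f = 0
      · simp [hf0]
      · have : f.natDegree < s := (natDegree_lt_iff_degree_lt hf0).2 hf
        refine coeff_eq_zero_of_natDegree_lt (natDegree_mul_le.trans_lt ?_)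
        omega
    have hdvd : P.reverse ∣ L + C α * M := by
      refine ⟨f + Q.reverse * (C α * M), ?_⟩
      linear_combination hLM + (-C α * M) * hrev + X ^ s * M * h2
    have hzero : L + C α * M = 0 := by
      refine eq_zero_of_dvd_of_degree_lt hdvd ?_
      rw [degree_eq_natDegree hPr0, hPd]
      refine (degree_add_le _ _).trans_lt (max_lt hLd ?_)
      refine lt_of_le_of_lt ?_ hMd
      rw [degree_C_mul (left_ne_zero_of_mul_eq_one hα)]
    refine ⟨-(C α * M), mul_right_cancel₀ hPr0 ?_⟩
    linear_combination -hLM + (C α * M) * hrev + hzero - X ^ s * M * h2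
  · rintro ⟨u, rfl⟩ g hg ⟨w, rfl⟩
    by_cases hu : u = 0
    · simp [hu]
    by_cases hw : w = 0
    · simp [hw]
    rw [degree_eq_natDegree (mul_ne_zero hQr0 hu), natDegree_mul hQr0 hu, hQd] at hf
    rw [degree_eq_natDegree (mul_ne_zero hP0 hw), natDegree_mul hP0 hw] at hg
    have hf' : Q.natDegree + u.natDegree < s := by exact_mod_cast hf
    have hg' : P.natDegree + w.natDegree < s := by exact_mod_cast hg
    have hwd : w.natDegree ≤ s - 1 - P.natDegree := by omega
    have h4 : reflect (s - 1) (P * w) = P.reverse * reflect (s - 1 - P.natDegree) w := by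
      conv_lhs => rw [show s - 1 = P.natDegree + (s - 1 - P.natDegree) by omega]
      rw [reflect_mul _ _ le_rfl hwd]
      rfl
    have h5 : Q.reverse * u * (P.reverse * reflect (s - 1 - P.natDegree) w)
        = u * reflect (s - 1 - P.natDegree) w
          - X ^ s * (C α * (u * reflect (s - 1 - P.natDegree) w)) := by
      linear_combination (u * reflect (s - 1 - P.natDegree) w) * hrev
    rw [sum_coeff_mul_coeff s hs, h4, h5, coeff_sub, coeff_X_pow_mul', if_neg (by omega), sub_zero]
    refine coeff_eq_zero_of_natDegree_lt (natDegree_mul_le.trans_lt ?_)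
    have := natDegree_reflect_le_of_le hwd
    omega

end Factor

/-! ### Decomposition of the code by idempotents -/

section Membership

variable {F : Type*} [Field F]

theorem injOn_nodes {k : ℕ} {ω : F} (hω : IsPrimitiveRoot ω k) :
    Set.InjOn (fun t : ℕ => ω ^ (1 + t * 1)) (Finset.range k : Set ℕ) := by
  intro a ha b hb hab
  have ha' : a < k := by simpa using ha
  have hb' : b < k := by simpa using hb
  have h0 : ω ≠ 0 := hω.ne_zero (by omega)
  refine hω.pow_inj ha' hb' (mul_left_cancel₀ h0 ?_)
  simpa [pow_add] using hab

theorem zetaPoly_eq_basis (ω : F) (k t : ℕ) :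
    zetaPoly ω 1 k t = Lagrange.basis (Finset.range k) (fun t : ℕ => ω ^ (1 + t * 1)) t := rfl

theorem eval_zetaPoly {k : ℕ} {ω : F} (hω : IsPrimitiveRoot ω k) (t t' : Fin k) :
    (zetaPoly ω 1 k t).eval (ω ^ (1 + (t' : ℕ))) = if t = t' then 1 else 0 := by
  have hinj := injOn_nodes hω
  rw [zetaPoly_eq_basis]
  generalize hv : (fun t : ℕ => ω ^ (1 + t * 1)) = v at hinj ⊢
  have h1 : ω ^ (1 + (t' : ℕ)) = v t' := by simp [← hv]
  rw [h1]
  split_ifs with h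
  · subst h
    exact Lagrange.eval_basis_self hinj (by simp)
  · exact Lagrange.eval_basis_of_ne (fun h' => h (Fin.ext h')) (by simp)

theorem sum_zetaPoly {k : ℕ} [NeZero k] {ω : F} (hω : IsPrimitiveRoot ω k) :
    ∑ t : Fin k, zetaPoly ω 1 k t = 1 := by
  rw [Fin.sum_univ_eq_sum_range (fun t => zetaPoly ω 1 k t) k]
  simp only [zetaPoly_eq_basis]
  exact Lagrange.sum_basis (injOn_nodes hω) (by simp [NeZero.ne k])

theorem nodal_eq_X_pow_sub_one {k : ℕ} [NeZero k] {ω : F} (hω : IsPrimitiveRoot ω k) :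
    Lagrange.nodal (Finset.range k) (fun t : ℕ => ω ^ (1 + t * 1)) = X ^ k - 1 := by
  have hk : 0 < k := Nat.pos_of_ne_zero (NeZero.ne k)
  have hdeg : (X ^ k - 1 : F[X]).degree = k := by
    rw [← C_1, degree_X_pow_sub_C hk]
  refine eq_of_degree_sub_lt_of_eval_index_eq (Finset.range k) (injOn_nodes hω) ?_ ?_
  · refine lt_of_lt_of_eq (degree_sub_lt_left ?_ Lagrange.nodal_ne_zero ?_) ?_
    · rw [hdeg, Lagrange.degree_nodal, Finset.card_range]
    · rw [Lagrange.nodal_monic.leadingCoeff, ← C_1, leadingCoeff_X_pow_sub_C hk]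
    · rw [Lagrange.degree_nodal]
  · intro i hi
    refine (Lagrange.eval_nodal_at_node (v := fun t : ℕ => ω ^ (1 + t * 1)) hi).trans ?_
    have h1 : (ω ^ (1 + i)) ^ k = 1 := by rw [← pow_mul, mul_comm, pow_mul, hω.pow_eq_one, one_pow]
    simp [h1]

/-- `ω ^ (1 + t)` is an eigenvalue of multiplication by the variable, with eigenvector `ζ_t`,
modulo `X ^ k - 1`. -/
theorem X_pow_sub_one_dvd {k : ℕ} [NeZero k] {ω : F} (hω : IsPrimitiveRoot ω k) (t : Fin k) :
    X ^ k - 1 ∣ zetaPoly ω 1 k t * (X - C (ω ^ (1 + (t : ℕ)))) := by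
  rw [← nodal_eq_X_pow_sub_one hω, Lagrange.nodal_eq_mul_nodal_erase (i := (t : ℕ)) (by simp),
    mul_comm]
  simp only [mul_one]
  refine mul_dvd_mul ?_ dvd_rfl
  rw [zetaPoly, Finset.prod_mul_distrib, Lagrange.nodal]
  have hu : IsUnit (∏ t' ∈ (Finset.range k).erase (t : ℕ),
      (C ((ω ^ (1 + (t : ℕ) * 1) - ω ^ (1 + t' * 1))⁻¹) : F[X])) := by
    rw [← map_prod, isUnit_C, isUnit_iff_ne_zero, Finset.prod_ne_zero_iff]
    intro t' ht'
    refine inv_ne_zero (sub_ne_zero.2 fun h => ?_)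
    obtain ⟨h1, h2⟩ := Finset.mem_erase.1 ht'
    exact h1 (injOn_nodes hω (by simpa using h2) (by simp) h.symm)
  simp only [mul_one] at hu ⊢
  exact Dvd.intro_left _ rfl

/-- Partial evaluation `y ↦ b`, `z ↦ c` of a polynomial in `x, y, z`. -/
noncomputable def evYZ (b c : F) : MvPolynomial (Fin 3) F →ₐ[F] F[X] :=
  MvPolynomial.aeval ![X, C b, C c]

@[simp] theorem evYZ_X0 (b c : F) : evYZ b c (MvPolynomial.X 0) = X := by simp [evYZ]
@[simp] theorem evYZ_X1 (b c : F) : evYZ b c (MvPolynomial.X 1) = C b := by simp [evYZ]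
@[simp] theorem evYZ_X2 (b c : F) : evYZ b c (MvPolynomial.X 2) = C c := by simp [evYZ]

theorem evYZ_inX (b c : F) (f : F[X]) : evYZ b c (inX f) = f := by
  rw [inX, ← aeval_algHom_apply, evYZ_X0, aeval_X_left_apply]

theorem evYZ_inY (b c : F) (f : F[X]) : evYZ b c (inY f) = C (f.eval b) := by
  rw [inY, ← aeval_algHom_apply, evYZ_X1, ← algebraMap_eq, aeval_algebraMap_apply, coe_aeval_eq_eval]

theorem evYZ_inZ (b c : F) (f : F[X]) : evYZ b c (inZ f) = C (f.eval c) := by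
  rw [inZ, ← aeval_algHom_apply, evYZ_X2, ← algebraMap_eq, aeval_algebraMap_apply, coe_aeval_eq_eval]

variable {s l k : ℕ} [NeZero l] [NeZero k] {α ω θ : F}

/-- Modulo the defining ideal, the idempotent `ζ_t(z) η_j(y)` turns any polynomial into its partial
evaluation at `y = θ ^ (1 + j)`, `z = ω ^ (1 + t)`. -/
theorem idempotent_mul_mk (hω : IsPrimitiveRoot ω k) (hθ : IsPrimitiveRoot θ l)
    (t : Fin k) (j : Fin l) (f : MvPolynomial (Fin 3) F) :
    Ideal.Quotient.mk (ccIdeal F s l k α 1 1)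
        (inZ (zetaPoly ω 1 k t) * inY (zetaPoly θ 1 l j) * f) =
      Ideal.Quotient.mk (ccIdeal F s l k α 1 1)
        (inZ (zetaPoly ω 1 k t) * inY (zetaPoly θ 1 l j) *
          inX (evYZ (θ ^ (1 + (j : ℕ))) (ω ^ (1 + (t : ℕ))) f)) := by
  rw [Ideal.Quotient.eq]
  set I := ccIdeal F s l k α 1 1 with hI
  set e := inZ (zetaPoly ω 1 k t) * inY (zetaPoly θ 1 l j) with he
  have hy : e * (MvPolynomial.X 1 - MvPolynomial.C (θ ^ (1 + (j : ℕ)))) ∈ I := by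
    obtain ⟨u, hu⟩ := X_pow_sub_one_dvd hθ j
    have h1 := congrArg (inY (F := F)) hu
    simp only [inY, map_mul, map_sub, aeval_X, aeval_C, map_pow, map_one] at h1
    have h2 : (MvPolynomial.X 1 ^ l - MvPolynomial.C 1 : MvPolynomial (Fin 3) F) ∈ I :=
      Ideal.subset_span (by simp)
    have h3 := I.mul_mem_left (inZ (zetaPoly ω 1 k t) * inY u) h2
    convert h3 using 1
    simp only [he, inY, map_one, map_pow, ← MvPolynomial.algebraMap_eq]
    linear_combination inZ (zetaPoly ω 1 k t) * h1
  have hz : e * (MvPolynomial.X 2 - MvPolynomial.C (ω ^ (1 + (t : ℕ)))) ∈ I := by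
    obtain ⟨u, hu⟩ := X_pow_sub_one_dvd hω t
    have h1 := congrArg (inZ (F := F)) hu
    simp only [inZ, map_mul, map_sub, aeval_X, aeval_C, map_pow, map_one] at h1
    have h2 : (MvPolynomial.X 2 ^ k - MvPolynomial.C 1 : MvPolynomial (Fin 3) F) ∈ I :=
      Ideal.subset_span (by simp)
    have h3 := I.mul_mem_left (inY (zetaPoly θ 1 l j) * inZ u) h2
    convert h3 using 1
    simp only [he, inZ, map_one, map_pow, ← MvPolynomial.algebraMap_eq]
    linear_combination inY (zetaPoly θ 1 l j) * h1
  induction f using MvPolynomial.induction_on with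
  | C a =>
    have : inX (evYZ (θ ^ (1 + (j : ℕ))) (ω ^ (1 + (t : ℕ))) (MvPolynomial.C a))
        = MvPolynomial.C a := by
      simp [inX, ← MvPolynomial.algebraMap_eq]
    rw [this, sub_self]
    exact I.zero_mem
  | add f g hf hg =>
    have h := I.add_mem hf hg
    convert h using 1
    simp only [inX, map_add]
    ring
  | mul_X f i hf =>
    have hi : e * (MvPolynomial.X i
        - inX (evYZ (θ ^ (1 + (j : ℕ))) (ω ^ (1 + (t : ℕ))) (MvPolynomial.X i))) ∈ I := by
      fin_cases i
      · simp [inX]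
      · convert hy using 2
        simp [inX, -map_pow, ← MvPolynomial.algebraMap_eq]
      · convert hz using 2
        simp [inX, -map_pow, ← MvPolynomial.algebraMap_eq]
    have h := I.add_mem (I.mul_mem_left (MvPolynomial.X i) hf)
      (I.mul_mem_left (inX (evYZ (θ ^ (1 + (j : ℕ))) (ω ^ (1 + (t : ℕ))) f)) hi)
    convert h using 1
    simp only [inX, map_mul]
    ring

/-- The code generated by the `ζ_t(z) η_j(y) p_{t,j}(x)` consists of the classes of those
polynomials whose partial evaluation at `y = θ ^ (1 + j)`, `z = ω ^ (1 + t)` is divisible by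
`p_{t,j}` for all `t, j`. -/
theorem mk_mem_code_iff (hω : IsPrimitiveRoot ω k) (hθ : IsPrimitiveRoot θ l)
    (p : Fin k → Fin l → F[X]) (hp : ∀ t j, p t j ∣ X ^ s - C α) (f : MvPolynomial (Fin 3) F) :
    Ideal.Quotient.mk (ccIdeal F s l k α 1 1) f ∈
      Ideal.span (Set.range fun tj : Fin k × Fin l =>
        Ideal.Quotient.mk (ccIdeal F s l k α 1 1)
          (inZ (zetaPoly ω 1 k tj.1) * inY (zetaPoly θ 1 l tj.2) * inX (p tj.1 tj.2))) ↔
      ∀ t j, p t j ∣ evYZ (θ ^ (1 + (j : ℕ))) (ω ^ (1 + (t : ℕ))) f := by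
  have hroot : ∀ {n : ℕ} {ξ : F}, IsPrimitiveRoot ξ n → ∀ m : ℕ, (ξ ^ m) ^ n = 1 := by
    intro n ξ h m
    rw [← pow_mul, mul_comm, pow_mul, h.pow_eq_one, one_pow]
  constructor
  · intro hf t j
    set E := evYZ (θ ^ (1 + (j : ℕ))) (ω ^ (1 + (t : ℕ))) with hE
    have hI : ∀ a ∈ ccIdeal F s l k α 1 1,
        ((Ideal.Quotient.mk (Ideal.span {p t j})).comp E.toRingHom) a = 0 := by
      intro a ha
      have hle : ccIdeal F s l k α 1 1 ≤
          RingHom.ker ((Ideal.Quotient.mk (Ideal.span {p t j})).comp E.toRingHom) := by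
        rw [ccIdeal, Ideal.span_le]
        rintro b (rfl | rfl | rfl)
        · have : E (MvPolynomial.X 0 ^ s - MvPolynomial.C α) = X ^ s - C α := by
            simp [hE, ← MvPolynomial.algebraMap_eq]
          simpa [RingHom.mem_ker, Ideal.Quotient.eq_zero_iff_mem, Ideal.mem_span_singleton, -map_sub,
            this] using hp t j
        · have : E (MvPolynomial.X 1 ^ l - MvPolynomial.C 1) = 0 := by
            simp only [hE, map_sub, map_pow, evYZ_X1, map_one]
            rw [← C_pow, ← C_pow, hroot hθ, C_1, sub_self]
          change Ideal.Quotient.mk _ (E _) = 0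
          rw [this, map_zero]
        · have : E (MvPolynomial.X 2 ^ k - MvPolynomial.C 1) = 0 := by
            simp only [hE, map_sub, map_pow, evYZ_X2, map_one]
            rw [← C_pow, ← C_pow, hroot hω, C_1, sub_self]
          change Ideal.Quotient.mk _ (E _) = 0
          rw [this, map_zero]
      exact hle ha
    have hker : Ideal.span (Set.range fun tj : Fin k × Fin l =>
        Ideal.Quotient.mk (ccIdeal F s l k α 1 1)
          (inZ (zetaPoly ω 1 k tj.1) * inY (zetaPoly θ 1 l tj.2) * inX (p tj.1 tj.2))) ≤
        RingHom.ker (Ideal.Quotient.lift (ccIdeal F s l k α 1 1) _ hI) := by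
      rw [Ideal.span_le]
      rintro _ ⟨⟨t', j'⟩, rfl⟩
      have hgen : p t j ∣
          E (inZ (zetaPoly ω 1 k t') * inY (zetaPoly θ 1 l j') * inX (p t' j')) := by
        rw [map_mul, map_mul, hE, evYZ_inX, evYZ_inY, evYZ_inZ, eval_zetaPoly hω,
          eval_zetaPoly hθ]
        by_cases ht : t' = t
        · by_cases hj : j' = j
          · simp [ht, hj]
          · simp [hj]
        · simp [ht]
      simpa [RingHom.mem_ker, Ideal.Quotient.eq_zero_iff_mem, Ideal.mem_span_singleton,
        -map_mul] using hgen
    have h := hker hf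
    simpa [RingHom.mem_ker, Ideal.Quotient.eq_zero_iff_mem, Ideal.mem_span_singleton] using h
  · intro hf
    have hone : f = ∑ t : Fin k, ∑ j : Fin l,
        inZ (zetaPoly ω 1 k t) * inY (zetaPoly θ 1 l j) * f := by
      have h1 : ∑ t : Fin k, inZ (zetaPoly ω 1 k t) = 1 := by
        simp only [inZ]
        rw [← map_sum, sum_zetaPoly hω, map_one]
      have h2 : ∑ j : Fin l, inY (zetaPoly θ 1 l j) = 1 := by
        simp only [inY]
        rw [← map_sum, sum_zetaPoly hθ, map_one]
      simp_rw [← Finset.sum_mul, ← Finset.mul_sum, h2, mul_one, h1, one_mul]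
    rw [hone, map_sum]
    refine Ideal.sum_mem _ fun t _ => ?_
    rw [map_sum]
    refine Ideal.sum_mem _ fun j _ => ?_
    rw [idempotent_mul_mk hω hθ]
    obtain ⟨u, hu⟩ := hf t j
    rw [hu]
    have : inX (p t j * u) = inX (p t j) * inX u := by simp [inX]
    rw [this, ← mul_assoc, map_mul]
    exact Ideal.mul_mem_right _ _ (Ideal.subset_span ⟨(t, j), rfl⟩)

end Membership

/-! ### Spectra and the dot product -/

section Spectrum

variable {F : Type*} [Field F] {s : ℕ} {I : Type*} [Fintype I]

/-- The spectrum of `v` at `τ`: transform each slice `v (i, ·)` by the matrix `W`, take the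
entry at `τ`, and read the result as the `i`-th coefficient of a polynomial in `x`. -/
noncomputable def spec (W : I → I → F) (v : Fin s × I → F) (τ : I) : F[X] :=
  ∑ i : Fin s, C (∑ u, W τ u * v (i, u)) * X ^ (i : ℕ)

theorem coeff_spec (W : I → I → F) (v : Fin s × I → F) (τ : I) (i : Fin s) :
    (spec W v τ).coeff i = ∑ u, W τ u * v (i, u) := by
  rw [spec, finsetSum_coeff, Finset.sum_eq_single i]
  · rw [coeff_C_mul, coeff_X_pow_self, mul_one]
  · intro b _ hb
    rw [coeff_C_mul, coeff_X_pow, if_neg (fun h => hb (Fin.ext h.symm)), mul_zero]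
  · simp

theorem degree_spec_lt (W : I → I → F) (v : Fin s × I → F) (τ : I) :
    (spec W v τ).degree < s := by
  rw [spec, degree_lt_iff_coeff_zero]
  intro m hm
  rw [finsetSum_coeff]
  refine Finset.sum_eq_zero fun i _ => ?_
  have hi := i.2
  rw [coeff_C_mul, coeff_X_pow, if_neg (by omega), mul_zero]

theorem eq_of_coeff_eq {f g : F[X]} (hf : f.degree < s) (hg : g.degree < s)
    (h : ∀ i : Fin s, f.coeff i = g.coeff i) : f = g := by
  ext n
  by_cases hn : n < s
  · exact h ⟨n, hn⟩
  · rw [(degree_lt_iff_coeff_zero _ _).1 hf n (by omega),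
      (degree_lt_iff_coeff_zero _ _).1 hg n (by omega)]

variable [DecidableEq I] {W : I → I → F} {σ : I → I} {n : F}

theorem exists_spec_eq (hn : n ≠ 0)
    (hW : ∀ a b, ∑ u, W a u * W (σ b) u = if a = b then n else 0)
    (G : I → F[X]) (hG : ∀ τ, (G τ).degree < s) :
    ∃ v : Fin s × I → F, ∀ τ, spec W v τ = G τ := by
  refine ⟨fun w => n⁻¹ * ∑ τ, W (σ τ) w.2 * (G τ).coeff w.1, fun τ => ?_⟩
  refine eq_of_coeff_eq (degree_spec_lt _ _ _) (hG τ) fun i => ?_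
  rw [coeff_spec]
  calc ∑ u, W τ u * (n⁻¹ * ∑ τ', W (σ τ') u * (G τ').coeff i)
      = ∑ τ', n⁻¹ * (∑ u, W τ u * W (σ τ') u) * (G τ').coeff i := by
        simp_rw [Finset.mul_sum, Finset.sum_mul]
        rw [Finset.sum_comm]
        refine Finset.sum_congr rfl fun _ _ => Finset.sum_congr rfl fun _ _ => ?_
        ring
    _ = (G τ).coeff i := by
        simp [hW, hn]

/-- Fourier inversion on the index set `I`. -/
theorem inversion (hn : n ≠ 0)
    (hW : ∀ a b, ∑ u, W a u * W (σ b) u = if a = b then n else 0) (u u' : I) :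
    ∑ τ, W (σ τ) u * W τ u' = if u = u' then n else 0 := by
  have h1 : (Matrix.of W : Matrix I I F) * (Matrix.of fun u τ => n⁻¹ * W (σ τ) u : Matrix I I F) = 1 := by
    ext a b
    rw [Matrix.mul_apply, Matrix.one_apply]
    simp only [Matrix.of_apply]
    simp_rw [mul_left_comm _ n⁻¹]
    rw [← Finset.mul_sum, hW]
    split_ifs <;> simp [hn]
  have h2 := congrArg (fun M : Matrix I I F => M u u') (mul_eq_one_comm.1 h1)
  rw [Matrix.mul_apply, Matrix.one_apply] at h2
  simp only [Matrix.of_apply, mul_assoc] at h2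
  rw [← Finset.mul_sum] at h2
  rw [← mul_right_inj' (inv_ne_zero hn), h2]
  split_ifs <;> simp [hn]

/-- Parseval's identity: the dot product pairs the spectrum at `σ τ` with the spectrum at `τ`. -/
theorem parseval (hn : n ≠ 0)
    (hW : ∀ a b, ∑ u, W a u * W (σ b) u = if a = b then n else 0) (v b : Fin s × I → F) :
    n * ∑ w, v w * b w =
      ∑ τ, ∑ i ∈ Finset.range s, (spec W v (σ τ)).coeff i * (spec W b τ).coeff i := by
  have h1 : ∀ τ, ∑ i ∈ Finset.range s, (spec W v (σ τ)).coeff i * (spec W b τ).coeff i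
      = ∑ i : Fin s, ∑ u, ∑ u', (v (i, u) * b (i, u')) * (W (σ τ) u * W τ u') := by
    intro τ
    rw [← Fin.sum_univ_eq_sum_range
      (fun i => (spec W v (σ τ)).coeff i * (spec W b τ).coeff i) s]
    refine Finset.sum_congr rfl fun i _ => ?_
    rw [coeff_spec, coeff_spec, Finset.sum_mul_sum]
    refine Finset.sum_congr rfl fun _ _ => Finset.sum_congr rfl fun _ _ => ?_
    ring
  simp_rw [h1]
  rw [Finset.sum_comm, Fintype.sum_prod_type, Finset.mul_sum]
  refine Finset.sum_congr rfl fun i _ => ?_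
  rw [Finset.sum_comm, Finset.mul_sum]
  refine Finset.sum_congr rfl fun u _ => ?_
  rw [Finset.sum_comm]
  simp_rw [← Finset.mul_sum, inversion hn hW]
  simp [mul_comm]

variable {α : F} {P Q : I → F[X]}

/-- The orthogonal complement of the code with spectra divisible by the `P τ` consists of the
words whose spectrum at `σ τ` is divisible by `(Q τ)*`. -/
theorem orthogonal_iff (hs : 0 < s) (hα : α * α = 1) (hn : n ≠ 0)
    (hW : ∀ a b, ∑ u, W a u * W (σ b) u = if a = b then n else 0)
    (hPQ : ∀ τ, P τ * Q τ = X ^ s - C α) (v : Fin s × I → F) :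
    (∀ b : Fin s × I → F, (∀ τ, P τ ∣ spec W b τ) → ∑ w, v w * b w = 0) ↔
      ∀ τ, (Q τ).reverse ∣ spec W v (σ τ) := by
  constructor
  · intro H τ
    refine (orthogonal_iff_reverse_dvd hs hα (hPQ τ) (degree_spec_lt _ _ _)).1 fun g hg hPg => ?_
    obtain ⟨b, hb⟩ := exists_spec_eq (s := s) hn hW (Pi.single τ g) (by
      intro τ'
      by_cases h : τ' = τ
      · subst h; simpa using hg
      · simp [h])
    have h1 := parseval hn hW v b
    rw [H b (by
      intro τ'
      rw [hb]
      by_cases h : τ' = τ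
      · subst h; simpa using hPg
      · simp [h]), mul_zero, Finset.sum_eq_single τ] at h1
    · simpa [hb] using h1.symm
    · intro τ' _ h
      simp [hb, h]
    · simp
  · intro H b hb
    refine (mul_eq_zero.1 ((parseval hn hW v b).trans
      (Finset.sum_eq_zero fun τ _ => ?_))).resolve_left hn
    exact (orthogonal_iff_reverse_dvd hs hα (hPQ τ) (degree_spec_lt _ _ _)).2 (H τ) _
      (degree_spec_lt _ _ _) (hb τ)

/-- Self-duality, tested on words whose spectrum is supported at a single index. -/
theorem selfDual_iff (hs : 0 < s) (hα : α * α = 1) (hn : n ≠ 0)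
    (hW : ∀ a b, ∑ u, W a u * W (σ b) u = if a = b then n else 0) (hσ : ∀ τ, σ (σ τ) = τ)
    (hPQ : ∀ τ, P τ * Q τ = X ^ s - C α) :
    (∀ v : Fin s × I → F, (∀ τ, P τ ∣ spec W v τ) ↔
      (∀ b : Fin s × I → F, (∀ τ, P τ ∣ spec W b τ) → ∑ w, v w * b w = 0)) ↔
      ∀ τ, P (σ τ) ∣ (Q τ).reverse ∧ (Q τ).reverse ∣ P (σ τ) := by
  simp_rw [orthogonal_iff hs hα hn hW hPQ]
  constructor
  · intro H τ
    have key : ∀ g : F[X], g.degree < s → (P (σ τ) ∣ g ↔ (Q τ).reverse ∣ g) := by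
      intro g hg
      obtain ⟨v, hv⟩ := exists_spec_eq (s := s) hn hW (Pi.single (σ τ) g) (by
        intro τ'
        by_cases h : τ' = σ τ
        · subst h; simpa using hg
        · simp [h])
      have h1 := H v
      constructor
      · intro h
        have := h1.1 (fun τ' => by
          rw [hv]
          by_cases h' : τ' = σ τ
          · subst h'; simpa using h
          · simp [h']) τ
        simpa [hv] using this
      · intro h
        have := h1.2 (fun τ' => by
          rw [hv]
          by_cases h' : τ' = τ
          · subst h'; simpa using h
          · have : σ τ' ≠ σ τ := fun h2 => h' (by rw [← hσ τ', h2, hσ])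
            simp [this]) (σ τ)
        simpa [hv] using this
    -- Both polynomials divide `X ^ s - α`, so the equivalence extends to all `g` by reduction.
    have hmon : (X ^ s - C α : F[X]).Monic := monic_X_pow_sub_C α hs.ne'
    have hP : P (σ τ) ∣ X ^ s - C α := ⟨_, (hPQ (σ τ)).symm⟩
    have hQ : (Q τ).reverse ∣ X ^ s - C α := reverse_dvd_X_pow_sub hα (hPQ τ)
    have key' : ∀ g : F[X], (P (σ τ) ∣ g ↔ (Q τ).reverse ∣ g) := by
      intro g
      have hd : (g %ₘ (X ^ s - C α)).degree < s := by
        have := degree_modByMonic_lt g hmon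
        rwa [degree_X_pow_sub_C hs] at this
      have h2 := key _ hd
      rwa [← dvd_add_left (hP.mul_right (g /ₘ (X ^ s - C α))),
        ← dvd_add_left (a := (Q τ).reverse) (hQ.mul_right (g /ₘ (X ^ s - C α))),
        modByMonic_add_div] at h2
    exact ⟨(key' _).2 dvd_rfl, (key' _).1 dvd_rfl⟩
  · intro H v
    constructor
    · intro h τ
      exact (H τ).2.trans (h (σ τ))
    · intro h τ
      have h1 := (H (σ τ)).1.trans (h (σ τ))
      rwa [hσ] at h1

end Spectrum

/-! ### The Fourier matrix at roots of unity -/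

section Roots

variable {F : Type*} [Field F]

/-- The index of the inverse node: `ω ^ (1 + negIdx t) = (ω ^ (1 + t))⁻¹` for `ω ^ k = 1`. -/
def negIdx {k : ℕ} (t : Fin k) : Fin k := ⟨(2 * k - 2 - (t : ℕ)) % k, Nat.mod_lt _ t.pos⟩

theorem negIdx_val {k : ℕ} (t : Fin k) :
    (negIdx t : ℕ) + t + 2 = k ∨ ((negIdx t : ℕ) + 1 = k ∧ (t : ℕ) + 1 = k) := by
  have ht := t.2
  have hv : (negIdx t : ℕ) = (2 * k - 2 - (t : ℕ)) % k := rfl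
  by_cases h : (t : ℕ) + 1 = k
  · right
    have h1 : (2 * k - 2 - (t : ℕ)) = k - 1 := by omega
    rw [h1, Nat.mod_eq_of_lt (by omega)] at hv
    omega
  · left
    have h1 : (2 * k - 2 - (t : ℕ)) = (k - 2 - t) + k := by omega
    rw [h1, Nat.add_mod_right, Nat.mod_eq_of_lt (by omega)] at hv
    omega

theorem negIdx_negIdx {k : ℕ} (t : Fin k) : negIdx (negIdx t) = t := by
  have h1 := negIdx_val t
  have h2 := negIdx_val (negIdx t)
  apply Fin.ext
  omega

theorem sum_node_pow {k : ℕ} {ω : F} (hω : IsPrimitiveRoot ω k) (t t' : Fin k) :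
    ∑ x : Fin k, (ω ^ (1 + (t : ℕ))) ^ (x : ℕ) * (ω ^ (1 + (negIdx t' : ℕ))) ^ (x : ℕ) =
      if t = t' then (k : F) else 0 := by
  simp_rw [← mul_pow, ← pow_add]
  set e := 1 + (t : ℕ) + (1 + (negIdx t' : ℕ)) with he
  have h0 := negIdx_val t'
  have ht := t.2
  have ht' := t'.2
  split_ifs with h
  · subst h
    have hk : k ∣ e := by
      rcases h0 with h0 | ⟨h0, h1⟩
      · exact ⟨1, by omega⟩
      · exact ⟨2, by omega⟩
    rw [(hω.pow_eq_one_iff_dvd e).2 hk]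
    simp
  · have hk : ¬ k ∣ e := by
      have hne : (t : ℕ) ≠ t' := fun h' => h (Fin.ext h')
      rintro ⟨m, hm⟩
      rcases m with _ | _ | _ | m
      · omega
      · omega
      · omega
      · have : k * (m + 1 + 1 + 1) = k * m + 3 * k := by ring
        rw [this] at hm
        have : 0 ≤ k * m := Nat.zero_le _
        omega
    have hne : ω ^ e ≠ 1 := fun h' => hk ((hω.pow_eq_one_iff_dvd e).1 h')
    rw [Fin.sum_univ_eq_sum_range (fun x => (ω ^ e) ^ x) k]
    have h2 := mul_geom_sum (ω ^ e) k
    rw [← pow_mul, mul_comm e k, pow_mul, hω.pow_eq_one, one_pow, sub_self] at h2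
    exact (mul_eq_zero.1 h2).resolve_left (sub_ne_zero.2 hne)

variable {s l k : ℕ}

/-- The two-dimensional Fourier matrix at the nodes `(θ ^ (1 + j), ω ^ (1 + t))`. -/
def fourierW (θ ω : F) (a u : Fin l × Fin k) : F :=
  (θ ^ (1 + (a.1 : ℕ))) ^ (u.1 : ℕ) * (ω ^ (1 + (a.2 : ℕ))) ^ (u.2 : ℕ)

theorem fourierW_orthogonal {θ ω : F} (hω : IsPrimitiveRoot ω k) (hθ : IsPrimitiveRoot θ l)
    (a b : Fin l × Fin k) :
    ∑ u, fourierW θ ω a u * fourierW θ ω (negIdx b.1, negIdx b.2) u =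
      if a = b then (l : F) * (k : F) else 0 := by
  have h1 := sum_node_pow hω a.2 b.2
  have h2 := sum_node_pow hθ a.1 b.1
  have h3 : ∑ u, fourierW θ ω a u * fourierW θ ω (negIdx b.1, negIdx b.2) u =
      (if a.1 = b.1 then (l : F) else 0) * (if a.2 = b.2 then (k : F) else 0) := by
    rw [← h1, ← h2, Finset.sum_mul_sum, Fintype.sum_prod_type]
    refine Finset.sum_congr rfl fun _ _ => Finset.sum_congr rfl fun _ _ => ?_
    simp only [fourierW]
    ring
  rw [h3]
  by_cases hj : a.1 = b.1 <;> by_cases ht : a.2 = b.2 <;> simp [hj, ht, Prod.ext_iff]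

theorem phiV_mem_iff [NeZero l] [NeZero k] {α θ ω : F} (hω : IsPrimitiveRoot ω k)
    (hθ : IsPrimitiveRoot θ l)
    (p : Fin k → Fin l → F[X]) (hp : ∀ t j, p t j ∣ X ^ s - C α)
    (v : Fin s × Fin l × Fin k → F) :
    phiV α 1 1 v ∈
      Ideal.span (Set.range fun tj : Fin k × Fin l =>
        Ideal.Quotient.mk (ccIdeal F s l k α 1 1)
          (inZ (zetaPoly ω 1 k tj.1) * inY (zetaPoly θ 1 l tj.2) * inX (p tj.1 tj.2))) ↔
      ∀ τ : Fin l × Fin k, p τ.2 τ.1 ∣ spec (fourierW θ ω) v τ := by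
  have h1 : phiV α 1 1 v = Ideal.Quotient.mk (ccIdeal F s l k α 1 1)
      (∑ w : Fin s × Fin l × Fin k, v w • (MvPolynomial.X 0 ^ (w.1 : ℕ) *
        MvPolynomial.X 1 ^ (w.2.1 : ℕ) * MvPolynomial.X 2 ^ (w.2.2 : ℕ))) := by
    rw [phiV, map_sum]
    rfl
  have h2 : ∀ (t : Fin k) (j : Fin l), evYZ (θ ^ (1 + (j : ℕ))) (ω ^ (1 + (t : ℕ)))
      (∑ w : Fin s × Fin l × Fin k, v w • (MvPolynomial.X 0 ^ (w.1 : ℕ) *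
        MvPolynomial.X 1 ^ (w.2.1 : ℕ) * MvPolynomial.X 2 ^ (w.2.2 : ℕ)))
      = spec (fourierW θ ω) v (j, t) := by
    intro t j
    rw [map_sum, spec, Fintype.sum_prod_type]
    refine Finset.sum_congr rfl fun i _ => ?_
    rw [map_sum, Finset.sum_mul]
    refine Finset.sum_congr rfl fun u _ => ?_
    rw [map_smul, smul_eq_C_mul]
    simp only [map_mul, map_pow, evYZ_X0, evYZ_X1, evYZ_X2, fourierW]
    ring
  rw [h1, mk_mem_code_iff hω hθ p hp]
  simp_rw [h2]
  exact ⟨fun h τ => h τ.2 τ.1, fun h t j => h (j, t)⟩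

end Roots

theorem exists_sub_mem_span_iff {F : Type*} [Field F] {A B D : F[X]} (h : B ∣ D) :
    (∃ m : F[X], A - m * B ∈ Ideal.span {D}) ↔ B ∣ A := by
  constructor
  · rintro ⟨m, hm⟩
    have h1 := h.trans (Ideal.mem_span_singleton.1 hm)
    simpa using dvd_add h1 (dvd_mul_left B m)
  · rintro ⟨m, rfl⟩
    exact ⟨m, by simp [mul_comm]⟩

/-! ### Self-duality -/

/-- **Theorem 4, case β = γ = 1**: the 3-D `(α,1,1)`-constacyclic code
`C = ⟨ζ_t(z)·η_j(y)·p_j^{(t)}(x)⟩` of length `sℓk` is self-dual iff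
`sℓk = 2·Σ a_{t,j}` and for all `t, j` one has
`q_j^{(t)*} ≡ m·p_{(ℓ−2−j) mod ℓ}^{((k−2−t) mod k)}` and
`p_j^{(t)} ≡ m'·q_{(ℓ−2−j) mod ℓ}^{((k−2−t) mod k)*}` modulo `x^s − α`
(the indices `(k−2−t) mod k` and `(ℓ−2−j) mod ℓ` are computed as
`(2k−2−t) mod k`, `(2ℓ−2−j) mod ℓ` to avoid truncated natural subtraction). -/
theorem stmt16 {F : Type*} [Field F] [Fintype F] (s l k : ℕ)
    [NeZero s] [NeZero l] [NeZero k]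
    (α : F) (hα : α = 1 ∨ α = -1)
    (ω : F) (hω : IsPrimitiveRoot ω k)
    (θ : F) (hθ : IsPrimitiveRoot θ l)
    (p q : Fin k → Fin l → Polynomial F) (a : Fin k → Fin l → ℕ)
    (hmonic : ∀ t j, (p t j).Monic)
    (hpq : ∀ t j, p t j * q t j = Polynomial.X ^ s - Polynomial.C α)
    (hdeg : ∀ t j, (p t j).natDegree = a t j)
    (C : Ideal (MvPolynomial (Fin 3) F ⧸ ccIdeal F s l k α 1 1))
    (hC : C = Ideal.span (Set.range fun tj : Fin k × Fin l =>
      Ideal.Quotient.mk (ccIdeal F s l k α 1 1)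
        (inZ (zetaPoly ω 1 k tj.1) * inY (zetaPoly θ 1 l tj.2) * inX (p tj.1 tj.2)))) :
    {v : Fin s × Fin l × Fin k → F | phiV α 1 1 v ∈ C} =
      {v : Fin s × Fin l × Fin k → F |
        ∀ b : Fin s × Fin l × Fin k → F, phiV α 1 1 b ∈ C → dotV v b = 0} ↔
      (s * l * k = 2 * ∑ t : Fin k, ∑ j : Fin l, a t j) ∧
      (∀ t : Fin k, ∀ j : Fin l,
        (∃ m : Polynomial F,
          (q t j).reverse -
              m * p ⟨(2 * k - 2 - (t : ℕ)) % k, Nat.mod_lt _ t.pos⟩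
                    ⟨(2 * l - 2 - (j : ℕ)) % l, Nat.mod_lt _ j.pos⟩
            ∈ Ideal.span {Polynomial.X ^ s - Polynomial.C α}) ∧
        (∃ m' : Polynomial F,
          p t j -
              m' * (q ⟨(2 * k - 2 - (t : ℕ)) % k, Nat.mod_lt _ t.pos⟩
                      ⟨(2 * l - 2 - (j : ℕ)) % l, Nat.mod_lt _ j.pos⟩).reverse
            ∈ Ideal.span {Polynomial.X ^ s - Polynomial.C α})) := by
  subst hC
  have hs : 0 < s := Nat.pos_of_ne_zero (NeZero.ne s)
  have hα2 : α * α = 1 := by rcases hα with rfl | rfl <;> ring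
  have hp : ∀ t j, p t j ∣ X ^ s - Polynomial.C α := fun t j => ⟨_, (hpq t j).symm⟩
  have hqr : ∀ t j, (q t j).reverse ∣ X ^ s - Polynomial.C α :=
    fun t j => reverse_dvd_X_pow_sub hα2 (hpq t j)
  have hn : (l : F) * (k : F) ≠ 0 := by
    have := hω.neZero'
    have := hθ.neZero'
    exact mul_ne_zero (NeZero.ne _) (NeZero.ne _)
  have hmain := selfDual_iff (s := s) (I := Fin l × Fin k) (W := fourierW θ ω)
    (σ := fun b => (negIdx b.1, negIdx b.2)) (P := fun τ => p τ.2 τ.1) (Q := fun τ => q τ.2 τ.1)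
    hs hα2 hn (fourierW_orthogonal hω hθ) (fun τ => by simp [negIdx_negIdx])
    (fun τ => hpq τ.2 τ.1)
  simp_rw [Set.ext_iff, Set.mem_ofPred_eq, phiV_mem_iff hω hθ p hp, dotV]
  rw [hmain]
  simp_rw [exists_sub_mem_span_iff (hp _ _), exists_sub_mem_span_iff (hqr _ _)]
  have hfold : ∀ {n : ℕ} (t : Fin n),
      (⟨(2 * n - 2 - (t : ℕ)) % n, Nat.mod_lt _ t.pos⟩ : Fin n) = negIdx t := fun _ => rfl
  simp_rw [hfold]
  constructor
  · intro H
    refine ⟨?_, fun t j => ⟨(H (j, t)).1, ?_⟩⟩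
    · -- Associated polynomials have equal degree: `a (-t) (-j) = s - a t j`.
      have h1 : ∀ t j, a t j + a (negIdx t) (negIdx j) = s := by
        intro t j
        have h2 : (p (negIdx t) (negIdx j)).natDegree = (q t j).reverse.natDegree :=
          natDegree_eq_of_degree_eq
            (degree_eq_degree_of_associated (associated_of_dvd_dvd (H (j, t)).1 (H (j, t)).2))
        rw [natDegree_reverse_of_coeff_zero (coeff_zero_ne_zero_of_mul_eq hs hα2
          ((mul_comm _ _).trans (hpq t j)))] at h2
        rw [← hdeg, ← hdeg, h2]
        exact natDegree_add_of_mul_eq hs (hpq t j)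
      have h3 : ∑ t : Fin k, ∑ j : Fin l, a (negIdx t) (negIdx j)
          = ∑ t : Fin k, ∑ j : Fin l, a t j := by
        have hinv : ∀ n, Function.Involutive (negIdx : Fin n → Fin n) := fun n => negIdx_negIdx
        rw [← Equiv.sum_comp (hinv k).toPerm fun t => ∑ j : Fin l, a t j]
        refine Finset.sum_congr rfl fun t _ => ?_
        exact Equiv.sum_comp (hinv l).toPerm fun j => a (negIdx t) j
      have h4 : ∑ t : Fin k, ∑ j : Fin l, (a t j + a (negIdx t) (negIdx j)) = s * l * k := by
        simp_rw [h1]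
        simp
        ring
      simp_rw [Finset.sum_add_distrib, h3] at h4
      omega
    · have h := (H (negIdx j, negIdx t)).2
      simpa [negIdx_negIdx] using h
  · rintro ⟨-, H⟩ τ
    refine ⟨(H τ.2 τ.1).1, ?_⟩
    have h := (H (negIdx τ.2) (negIdx τ.1)).2
    simpa [negIdx_negIdx] using h
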